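/- arXiv:1505.07763 — 2 statements merged into one kernel-verified Lean document; each statement's English description precedes it below -/
import Mathlib

section
/- Let f be a nonzero smooth compactly supported function on ℝⁿ, p > 1, q its conjugate. Let L_f = {ξ : ‖∇_ξ f‖_p ≤ 1}, C_f*(x) = ∫_{S^{n-1}} ‖∇_ξ f‖_p^{-(n+p)} |⟨x,ξ⟩|^p dξ, C_f its Legendre transform, and K_f = {x : C_f(x) ≤ 1}. Then K_f = ((n+p) vol(L_f) a₁)^{1/p} ℓ_q^{-1/p} Γ_p L_f, where a₁ = ω_{n+p}/(ω₂ ω_n ω_{p-1}), ℓ_q = q^{-p/q} p^{-1}, and Γ_p L_f is the L_p-centroid body of L_f. -/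
/-!
In polar coordinates, `C_f*(x) = (n + p) ∫_{L_f} |⟨x, y⟩|^p dy`, so `C_f*` is a multiple of
`h^p`, where `h` is the support function of `Γ_p L_f`. The Legendre transform of a `p`-homogeneous
`C` can be computed along rays: the supremum over `t > 0` of `t ⟨x, y⟩ - t^p C(y)` is the equality
case of Young's inequality, and it is at most `1` exactly when
`⟨x, y⟩ ≤ q^{1/q} (p C(y))^{1/p}`. Thus `K_f` has support function `q^{1/q} (p C_f*)^{1/p}`, a
multiple of `h`.
-/

open MeasureTheory Real
open scoped RealInnerProductSpace Pointwise

noncomputable section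

/-- `ω_s = π^(s/2) / Γ(s/2 + 1)`. -/
def omegaR (s : ℝ) : ℝ := Real.pi ^ (s / 2) / Real.Gamma (s / 2 + 1)

/-- `a₁ = ω_{n+p} / (ω₂ ω_n ω_{p-1})`. -/
def aOne (n : ℕ) (p : ℝ) : ℝ := omegaR (n + p) / (omegaR 2 * omegaR n * omegaR (p - 1))

/-- The `L^p` norm of the directional derivative `∇_ξ f = ⟨∇f, ξ⟩`. -/
def dirDerivLpNorm (n : ℕ) (p : ℝ) (f : EuclideanSpace ℝ (Fin n) → ℝ)
    (ξ : EuclideanSpace ℝ (Fin n)) : ℝ :=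
  (∫ y, |⟪gradient f y, ξ⟫| ^ p) ^ (1 / p)

/-- `C_f*(x) = ∫_{S^{n-1}} ‖∇_ξ f‖_p^{-(n+p)} |⟨x, ξ⟩|^p dξ`. -/
def Cfstar (n : ℕ) (p : ℝ) (f : EuclideanSpace ℝ (Fin n) → ℝ)
    (x : EuclideanSpace ℝ (Fin n)) : ℝ :=
  ∫ ξ : Metric.sphere (0 : EuclideanSpace ℝ (Fin n)) 1,
    dirDerivLpNorm n p f ξ ^ (-(n + p : ℝ)) * |⟪x, (ξ : EuclideanSpace ℝ (Fin n))⟫| ^ p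
      ∂(volume : Measure (EuclideanSpace ℝ (Fin n))).toSphere

/-- The Legendre transform. -/
def legendre {n : ℕ} (C : EuclideanSpace ℝ (Fin n) → ℝ) (x : EuclideanSpace ℝ (Fin n)) : ℝ :=
  ⨆ y : EuclideanSpace ℝ (Fin n), (⟪x, y⟫ - C y)

/-- The `L_p`-centroid body `Γ_p L`, described through its support function
`h_{Γ_p L}(v) = ((1/(a₁ vol(L))) ∫_L |⟨v, x⟩|^p dx)^{1/p}`. -/
def centroidBody (n : ℕ) (p : ℝ) (L : Set (EuclideanSpace ℝ (Fin n))) :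
    Set (EuclideanSpace ℝ (Fin n)) :=
  {x | ∀ v : EuclideanSpace ℝ (Fin n),
    ⟪x, v⟫ ≤ ((aOne n p * (volume L).toReal)⁻¹ * ∫ y in L, |⟪v, y⟫| ^ p) ^ (1 / p)}

/-- Positive homogeneity of degree `p`, under scaling by `t > 0` only, so that gauges
and their powers are covered. The value at the origin is not prescribed. -/
def PosHomogeneous {E : Type*} [SMul ℝ E] (p : ℝ) (g : E → ℝ) : Prop :=
  ∀ ⦃t : ℝ⦄, 0 < t → ∀ x, g (t • x) = t ^ p * g x

/-- The `p`-th absolute moment `∫ |⟨v, X⟩|^p dμ` of a random vector `X` in the direction `v`. Both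
`‖∇_ξ f‖_p^p` (with `X = ∇f`) and `∫_L |⟨v, y⟩|^p dy` (with `X = id`) are of this form. -/
def absMoment {Ω E : Type*} [MeasurableSpace Ω] [NormedAddCommGroup E] [InnerProductSpace ℝ E]
    (μ : Measure Ω) (p : ℝ) (X : Ω → E) (v : E) : ℝ :=
  ∫ ω, |⟪v, X ω⟫| ^ p ∂μ

namespace PosHomogeneous

theorem map_zero {E : Type*} [AddMonoid E] [DistribMulAction ℝ E] {p : ℝ} {g : E → ℝ}
    (hg : PosHomogeneous p g) (hp : 0 < p) : g 0 = 0 := by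
  by_contra hne
  have hdouble : g 0 = 2 ^ p * g 0 := by simpa only [smul_zero] using hg zero_lt_two 0
  exact (Real.one_lt_rpow one_lt_two hp).ne' ((right_eq_mul₀ hne).1 hdouble)

theorem const_mul {E : Type*} [SMul ℝ E] {p : ℝ} {g : E → ℝ} (hg : PosHomogeneous p g) (a : ℝ) :
    PosHomogeneous p fun x => a * g x := fun t ht x => by
  simp only [hg ht, mul_left_comm]

theorem rpow_const {E : Type*} [SMul ℝ E] {p : ℝ} {g : E → ℝ} (hg : PosHomogeneous p g)
    (hg0 : ∀ x, 0 ≤ g x) (s : ℝ) : PosHomogeneous (p * s) fun x => g x ^ s := fun t ht x => by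
  simp only [hg ht, Real.mul_rpow (Real.rpow_nonneg ht.le p) (hg0 x), Real.rpow_mul ht.le]

section Norm

variable {E : Type*} [NormedAddCommGroup E] [NormedSpace ℝ E] [FiniteDimensional ℝ E] {p : ℝ}
  {g : E → ℝ}

theorem exists_mul_norm_rpow_le (hg : PosHomogeneous p g) (hp : 0 < p) (hcont : Continuous g)
    (hpos : ∀ x ≠ 0, 0 < g x) : ∃ c > 0, ∀ x, c * ‖x‖ ^ p ≤ g x := by
  have hzero : ∀ c : ℝ, c * ‖(0 : E)‖ ^ p ≤ g 0 := by
    simp [hg.map_zero hp, Real.zero_rpow hp.ne']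
  rcases subsingleton_or_nontrivial E with _ | _
  · exact ⟨1, one_pos, fun x => Subsingleton.elim 0 x ▸ hzero 1⟩
  obtain ⟨ξ, hξ, hmin⟩ := (isCompact_sphere (0 : E) 1).exists_isMinOn
    (NormedSpace.sphere_nonempty.2 zero_le_one) hcont.continuousOn
  refine ⟨g ξ, hpos ξ (ne_zero_of_mem_unit_sphere ⟨ξ, hξ⟩), fun x => ?_⟩
  rcases eq_or_ne x 0 with rfl | hx
  · exact hzero _
  have hxn : 0 < ‖x‖ := norm_pos_iff.2 hx
  have hunit : g ξ ≤ g (‖x‖⁻¹ • x) := hmin (by simp [norm_smul, hxn.ne'])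
  calc g ξ * ‖x‖ ^ p ≤ g (‖x‖⁻¹ • x) * ‖x‖ ^ p := by gcongr
    _ = g (‖x‖ • ‖x‖⁻¹ • x) := by rw [hg hxn, mul_comm]
    _ = g x := by rw [smul_inv_smul₀ hxn.ne']

theorem isCompact_setOf_le_one (hg : PosHomogeneous p g) (hp : 0 < p) (hcont : Continuous g)
    (hpos : ∀ x ≠ 0, 0 < g x) : IsCompact {x | g x ≤ 1} := by
  obtain ⟨c, hc, hle⟩ := hg.exists_mul_norm_rpow_le hp hcont hpos
  have hsub : {x | g x ≤ 1} ⊆ Metric.closedBall 0 (c⁻¹ ^ p⁻¹) := fun x hx => by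
    rw [mem_closedBall_zero_iff, Real.le_rpow_inv_iff_of_pos (norm_nonneg x) (by positivity) hp,
      ← one_div, le_div_iff₀' hc]
    exact (hle x).trans hx
  exact (isCompact_closedBall 0 _).of_isClosed_subset (isClosed_le hcont continuous_const) hsub

end Norm

theorem setOf_le_one_mem_nhds_zero {E : Type*} [TopologicalSpace E] [AddMonoid E]
    [DistribMulAction ℝ E] {p : ℝ} {g : E → ℝ} (hg : PosHomogeneous p g) (hp : 0 < p)
    (hcont : ContinuousAt g 0) : {x | g x ≤ 1} ∈ nhds 0 :=
  hcont.eventually_le_const (by rw [hg.map_zero hp]; exact one_pos)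

end PosHomogeneous

section PolarCoordinates

variable {E : Type*} [NormedAddCommGroup E] [NormedSpace ℝ E]

theorem setIntegral_compl_zero_eq_integral_toSphere [FiniteDimensional ℝ E] [MeasurableSpace E]
    [BorelSpace E] {F : Type*} [NormedAddCommGroup F] [NormedSpace ℝ F] (μ : Measure E)
    [μ.IsAddHaarMeasure] {G : E → F} (hG : IntegrableOn G {0}ᶜ μ) :
    ∫ x in {0}ᶜ, G x ∂μ = ∫ ξ : Metric.sphere (0 : E) 1,
      (∫ r in Set.Ioi (0 : ℝ), r ^ (Module.finrank ℝ E - 1) • G (r • (ξ : E))) ∂μ.toSphere := by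
  have hmp := μ.measurePreserving_homeomorphUnitSphereProd
  have hemb := (homeomorphUnitSphereProd E).measurableEmbedding
  have hzero : MeasurableSet ({0}ᶜ : Set E) := (measurableSet_singleton 0).compl
  set H : Metric.sphere (0 : E) 1 × Set.Ioi (0 : ℝ) → F := fun z => G (z.2.1 • z.1.1) with hH
  have hcomp : H ∘ homeomorphUnitSphereProd E = G ∘ Subtype.val := by
    funext x
    have hx : ‖(x : E)‖ ≠ 0 := norm_ne_zero_iff.2 x.2
    simp [hH, smul_smul, hx]
  have hHint : Integrable H (μ.toSphere.prod (.volumeIoiPow (Module.finrank ℝ E - 1))) := by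
    rwa [← hmp.integrable_comp_emb hemb, hcomp, ← integrableOn_iff_comap_subtypeVal hzero]
  calc ∫ x in {0}ᶜ, G x ∂μ = ∫ x : ({0}ᶜ : Set E), G x ∂(μ.comap (↑)) :=
        (integral_subtype_comap hzero G).symm
    _ = ∫ z, H z ∂μ.toSphere.prod (.volumeIoiPow (Module.finrank ℝ E - 1)) := by
        rw [← hmp.integral_comp hemb]
        exact congrArg (integral _) hcomp.symm
    _ = _ := by
        rw [integral_prod _ hHint]
        refine integral_congr_ae (.of_forall fun ξ => ?_)
        simp only [Measure.volumeIoiPow, ENNReal.ofReal]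
        rw [integral_withDensity_eq_integral_smul (by fun_prop),
          integral_subtype_comap measurableSet_Ioi fun r : ℝ =>
            Real.toNNReal (r ^ (Module.finrank ℝ E - 1)) • G (r • (ξ : E))]
        refine setIntegral_congr_fun measurableSet_Ioi fun r (hr : 0 < r) => ?_
        simp only [NNReal.smul_def, Real.coe_toNNReal _ (pow_nonneg hr.le _)]

theorem PosHomogeneous.integral_Ioi_pow_mul_indicator {E : Type*} [SMul ℝ E] {p : ℝ} {N g : E → ℝ}
    (hg : PosHomogeneous p g) (hN : PosHomogeneous 1 N) {ξ : E} (hξ : 0 < N ξ) {m : ℕ}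
    (hmp : 0 < m + 1 + p) :
    ∫ r in Set.Ioi (0 : ℝ), r ^ m * Set.indicator {x | N x ≤ 1} g (r • ξ) =
      (m + 1 + p)⁻¹ * (N ξ ^ (-(m + 1 + p)) * g ξ) := by
  have hradial : ∀ r ∈ Set.Ioi (0 : ℝ), r ^ m * Set.indicator {x | N x ≤ 1} g (r • ξ) =
      Set.indicator (Set.Ioc 0 (N ξ)⁻¹) (fun r : ℝ => r ^ (m + p) * g ξ) r := by
    intro r (hr : 0 < r)
    have hmem : r • ξ ∈ {x | N x ≤ 1} ↔ r ∈ Set.Ioc 0 (N ξ)⁻¹ := by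
      rw [Set.mem_ofPred_eq, hN hr, Real.rpow_one, Set.mem_Ioc, ← one_div, le_div_iff₀ hξ]
      exact (and_iff_right hr).symm
    by_cases h : r • ξ ∈ {x | N x ≤ 1}
    · rw [Set.indicator_of_mem h, Set.indicator_of_mem (hmem.1 h), hg hr, Real.rpow_add hr,
        Real.rpow_natCast, mul_assoc]
    · rw [Set.indicator_of_notMem h, Set.indicator_of_notMem (mt hmem.2 h), mul_zero]
  rw [setIntegral_congr_fun measurableSet_Ioi hradial, setIntegral_indicator measurableSet_Ioc,
    Set.inter_eq_right.2 Set.Ioc_subset_Ioi_self, integral_mul_const,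
    ← intervalIntegral.integral_of_le (inv_pos.2 hξ).le,
    integral_rpow (Or.inl (by linarith)), add_right_comm, Real.zero_rpow hmp.ne', sub_zero,
    Real.inv_rpow hξ.le, Real.rpow_neg hξ.le]
  ring

theorem PosHomogeneous.setIntegral_setOf_le_one [FiniteDimensional ℝ E] [MeasurableSpace E]
    [BorelSpace E] (μ : Measure E) [μ.IsAddHaarMeasure] {p : ℝ} {N g : E → ℝ}
    (hg : PosHomogeneous p g) (hp : 0 < p) (hN : PosHomogeneous 1 N) (hNmeas : Measurable N)
    (hNpos : ∀ x ≠ 0, 0 < N x) (hgint : IntegrableOn g {x | N x ≤ 1} μ) :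
    ∫ x in {x | N x ≤ 1}, g x ∂μ = (Module.finrank ℝ E + p)⁻¹ *
      ∫ ξ : Metric.sphere (0 : E) 1, N ξ ^ (-(Module.finrank ℝ E + p)) * g ξ ∂μ.toSphere := by
  have hL : MeasurableSet {x | N x ≤ 1} := measurableSet_le hNmeas measurable_const
  have hGzero : ∀ x ∉ ({0}ᶜ : Set E), Set.indicator {x | N x ≤ 1} g x = 0 := fun x hx => by
    rw [Set.notMem_compl_iff.1 hx]
    simp [hg.map_zero hp]
  rw [← integral_indicator hL, ← setIntegral_eq_integral_of_forall_compl_eq_zero hGzero,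
    setIntegral_compl_zero_eq_integral_toSphere μ
      ((integrable_indicator_iff hL).2 hgint).integrableOn, ← integral_const_mul]
  refine integral_congr_ae (.of_forall fun ξ => ?_)
  have hξ : (ξ : E) ≠ 0 := ne_zero_of_mem_unit_sphere ξ
  have : Nontrivial E := ⟨ξ, 0, hξ⟩
  have hdim : ((Module.finrank ℝ E - 1 : ℕ) : ℝ) + 1 = Module.finrank ℝ E := by
    rw [Nat.cast_pred Module.finrank_pos, sub_add_cancel]
  simpa only [smul_eq_mul, hdim] using
    hg.integral_Ioi_pow_mul_indicator (m := Module.finrank ℝ E - 1) hN (hNpos ξ hξ) (by positivity)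

end PolarCoordinates

theorem exists_mem_interior_inner_ne_zero {E : Type*} [NormedAddCommGroup E]
    [InnerProductSpace ℝ E] {L : Set E} (hL : (interior L).Nonempty) {v : E} (hv : v ≠ 0) :
    ∃ y ∈ interior L, ⟪v, y⟫ ≠ 0 := by
  by_contra! h
  have hsub : interior L ⊆ (ℝ ∙ v)ᗮ := fun y hy =>
    Submodule.mem_orthogonal_singleton_iff_inner_right.2 (h y hy)
  have htop : (ℝ ∙ v)ᗮ = ⊤ := Submodule.eq_top_of_nonempty_interior' _
    (hL.mono (interior_maximal hsub isOpen_interior))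
  have hself : v ∈ (ℝ ∙ v)ᗮ := htop ▸ Submodule.mem_top
  exact hv (inner_self_eq_zero.1 (Submodule.mem_orthogonal_singleton_iff_inner_right.1 hself))

section AbsMoment

variable {Ω E : Type*} [MeasurableSpace Ω] [NormedAddCommGroup E] [InnerProductSpace ℝ E] {p : ℝ}
  {X : Ω → E}

theorem absMoment_nonneg (μ : Measure Ω) (p : ℝ) (X : Ω → E) (v : E) : 0 ≤ absMoment μ p X v :=
  integral_nonneg fun _ => by positivity

theorem posHomogeneous_abs_inner_rpow (p : ℝ) (v : E) :
    PosHomogeneous p fun y : E => |⟪v, y⟫| ^ p := fun t ht y => by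
  simp only [real_inner_smul_right, abs_mul, abs_of_pos ht, Real.mul_rpow ht.le (abs_nonneg _)]

theorem posHomogeneous_absMoment (μ : Measure Ω) (p : ℝ) (X : Ω → E) :
    PosHomogeneous p (absMoment μ p X) := fun t ht v => by
  simp only [absMoment, real_inner_smul_left, abs_mul, abs_of_pos ht,
    Real.mul_rpow ht.le (abs_nonneg _), integral_const_mul]

variable [TopologicalSpace Ω] {μ : Measure Ω} {K : Set Ω}

theorem continuous_absMoment_restrict [OpensMeasurableSpace Ω] [IsLocallyFiniteMeasure μ]
    [FiniteDimensional ℝ E] (hp : 0 ≤ p) (hX : Continuous X) (hK : IsCompact K) :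
    Continuous (absMoment (μ.restrict K) p X) :=
  continuous_parametric_integral_of_continuous (f := fun v ω => |⟪v, X ω⟫| ^ p)
    ((by fun_prop : Continuous fun z : E × Ω => |⟪z.1, X z.2⟫|).rpow_const fun _ => .inr hp) hK

theorem integrableOn_abs_inner_rpow [T2Space Ω] [OpensMeasurableSpace Ω]
    [IsFiniteMeasureOnCompacts μ] (hp : 0 ≤ p) (hX : Continuous X) (hK : IsCompact K) (v : E) :
    IntegrableOn (fun ω => |⟪v, X ω⟫| ^ p) K μ :=
  ((by fun_prop : Continuous fun ω => |⟪v, X ω⟫|).rpow_const fun _ =>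
    .inr hp).continuousOn.integrableOn_compact hK

theorem absMoment_restrict_pos [T2Space Ω] [OpensMeasurableSpace Ω]
    [IsFiniteMeasureOnCompacts μ] [μ.IsOpenPosMeasure] (hp : 0 < p) (hX : Continuous X)
    (hK : IsCompact K) {v : E} {ω : Ω} (hω : ω ∈ interior K) (hv : ⟪v, X ω⟫ ≠ 0) :
    0 < absMoment (μ.restrict K) p X v := by
  have hopen : IsOpen {ω | ⟪v, X ω⟫ ≠ 0} := isOpen_ne_fun (by fun_prop) continuous_const
  have hsub : {ω | ⟪v, X ω⟫ ≠ 0} ∩ interior K ⊆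
      Function.support (fun ω => |⟪v, X ω⟫| ^ p) ∩ K := fun ω hω =>
    ⟨(Real.rpow_pos_of_pos (abs_pos.2 hω.1) p).ne', interior_subset hω.2⟩
  rw [absMoment, setIntegral_pos_iff_support_of_nonneg_ae (.of_forall fun _ => by positivity)
    (integrableOn_abs_inner_rpow hp.le hX hK v)]
  exact ((hopen.inter isOpen_interior).measure_pos μ ⟨ω, hv, hω⟩).trans_le (measure_mono hsub)

theorem absMoment_restrict_id_pos [MeasurableSpace E] [BorelSpace E]
    {μ : Measure E} [IsFiniteMeasureOnCompacts μ] [μ.IsOpenPosMeasure] (hp : 0 < p) {L : Set E}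
    (hL : IsCompact L) (hLint : (interior L).Nonempty) {v : E} (hv : v ≠ 0) :
    0 < absMoment (μ.restrict L) p id v :=
  have ⟨_, hy, hvy⟩ := exists_mem_interior_inner_ne_zero hLint hv
  absMoment_restrict_pos hp continuous_id hL hy hvy

end AbsMoment

section Legendre

variable {p q a c : ℝ}

theorem mul_sub_rpow_mul_le (hpq : p.HolderConjugate q) {t : ℝ} (ha : 0 ≤ a) (hc : 0 < c)
    (ht : 0 ≤ t) : t * a - t ^ p * c ≤ (a / (p * c) ^ (1 / p)) ^ q / q := by
  have hp := hpq.pos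
  set A := (p * c) ^ (1 / p) with hA
  have hApos : 0 < A := by positivity
  have hAp : A ^ p = p * c := by rw [hA, one_div, Real.rpow_inv_rpow (by positivity) hp.ne']
  have hyoung := Real.young_inequality_of_nonneg (by positivity : 0 ≤ t * A)
    (by positivity : 0 ≤ a / A) hpq
  have hprod : t * A * (a / A) = t * a := by field_simp
  have hpow : (t * A) ^ p / p = t ^ p * c := by
    rw [Real.mul_rpow ht hApos.le, hAp]
    field_simp
  linarith

theorem exists_pos_mul_sub_rpow_mul_eq (hpq : p.HolderConjugate q) (ha : 0 < a) (hc : 0 < c) :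
    ∃ t > 0, t * a - t ^ p * c = (a / (p * c) ^ (1 / p)) ^ q / q := by
  have hp := hpq.pos
  set A := (p * c) ^ (1 / p) with hA
  have hApos : 0 < A := by positivity
  have hAp : A ^ p = p * c := by rw [hA, one_div, Real.rpow_inv_rpow (by positivity) hp.ne']
  set b := a / A with hb
  have hbpos : 0 < b := by positivity
  -- Equality in Young's inequality for `(t * A) * b` means `(t * A) ^ p = b ^ q`.
  refine ⟨b ^ (q / p) / A, by positivity, ?_⟩
  have hlin : b ^ (q / p) / A * a = b ^ q := by
    rw [div_mul_eq_mul_div, mul_div_assoc, ← hb, ← Real.rpow_add_one hbpos.ne',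
      hpq.symm.div_conj_eq_sub_one, sub_add_cancel]
  have hpow : (b ^ (q / p) / A) ^ p * c = b ^ q * p⁻¹ := by
    rw [Real.div_rpow (by positivity) hApos.le, hAp, ← Real.rpow_mul hbpos.le,
      div_mul_cancel₀ _ hp.ne']
    field_simp
  rw [hlin, hpow, div_eq_mul_inv, ← hpq.one_sub_inv, mul_one_sub]

theorem forall_mul_sub_rpow_mul_le_one_iff (hpq : p.HolderConjugate q) (ha : 0 < a) (hc : 0 < c) :
    (∀ t : ℝ, 0 < t → t * a - t ^ p * c ≤ 1) ↔ a ≤ q ^ (1 / q) * (p * c) ^ (1 / p) := by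
  have hp := hpq.pos
  have hq := hpq.symm.pos
  have hmax : (∀ t : ℝ, 0 < t → t * a - t ^ p * c ≤ 1) ↔
      (a / (p * c) ^ (1 / p)) ^ q / q ≤ 1 := by
    obtain ⟨t, ht, hval⟩ := exists_pos_mul_sub_rpow_mul_eq hpq ha hc
    exact ⟨fun h => hval ▸ h t ht, fun h s hs => (mul_sub_rpow_mul_le hpq ha.le hc hs.le).trans h⟩
  rw [hmax, div_le_one hq, ← Real.le_rpow_inv_iff_of_pos (by positivity) hq.le hq,
    div_le_iff₀ (by positivity), one_div q]

theorem setOf_legendre_le_one {n : ℕ} (hpq : p.HolderConjugate q) (hc : 0 < c)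
    {C : EuclideanSpace ℝ (Fin n) → ℝ} (hhom : PosHomogeneous p C)
    (hlow : ∀ y, c * ‖y‖ ^ p ≤ C y) :
    {x | legendre C x ≤ 1} = {x | ∀ y, ⟪x, y⟫ ≤ q ^ (1 / q) * (p * C y) ^ (1 / p)} := by
  have hp := hpq.pos
  have hq := hpq.symm.pos
  have hCnonneg : ∀ y, 0 ≤ C y := fun y => (by positivity : 0 ≤ c * ‖y‖ ^ p).trans (hlow y)
  ext x
  have hbdd : BddAbove (Set.range fun y => ⟪x, y⟫ - C y) := by
    refine ⟨_, Set.forall_mem_range.2 fun y => le_trans ?_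
      (mul_sub_rpow_mul_le hpq (norm_nonneg x) hc (norm_nonneg y))⟩
    linarith [hlow y, real_inner_le_norm x y]
  have hray : ∀ y, 0 < ⟪x, y⟫ → ((∀ t : ℝ, 0 < t → ⟪x, t • y⟫ - C (t • y) ≤ 1) ↔
      ⟪x, y⟫ ≤ q ^ (1 / q) * (p * C y) ^ (1 / p)) := fun y hy => by
    have hy0 : y ≠ 0 := by
      rintro rfl
      simp at hy
    have hCy : 0 < C y := lt_of_lt_of_le (by positivity) (hlow y)
    simp only [real_inner_smul_right, ← forall_mul_sub_rpow_mul_le_one_iff hpq hy hCy]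
    exact forall₂_congr fun t ht => by rw [hhom ht]
  simp only [Set.mem_ofPred_eq, legendre, ciSup_le_iff hbdd]
  refine ⟨fun h y => ?_, fun h y => ?_⟩ <;> rcases le_or_gt ⟪x, y⟫ 0 with hy | hy
  · have := hCnonneg y
    exact hy.trans (by positivity)
  · exact (hray y hy).1 fun t _ => h _
  · linarith [hCnonneg y]
  · simpa only [one_smul] using (hray y hy).2 (h y) 1 one_pos

end Legendre

theorem omegaR_pos {s : ℝ} (hs : -2 < s) : 0 < omegaR s :=
  div_pos (Real.rpow_pos_of_pos Real.pi_pos _) (Real.Gamma_pos_of_pos (by linarith))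

theorem aOne_pos (n : ℕ) {p : ℝ} (hp : -1 < p) : 0 < aOne n p := by
  have hn : (0 : ℝ) ≤ n := n.cast_nonneg
  exact div_pos (omegaR_pos (by linarith only [hn, hp])) (mul_pos (mul_pos
    (omegaR_pos (by norm_num)) (omegaR_pos (by linarith only [hn])))
    (omegaR_pos (by linarith only [hp])))

theorem rpow_mul_inv_rpow_neg_one_div {p q : ℝ} (hp : 0 < p) (hq : 0 < q) :
    (q ^ (-(p / q)) * p⁻¹) ^ (-(1 / p)) = q ^ (1 / q) * p ^ (1 / p) := by
  have hexp : p / q * (1 / p) = 1 / q := by field_simp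
  rw [Real.mul_rpow (by positivity) (by positivity), ← Real.rpow_mul hq.le, neg_mul_neg, hexp,
    Real.inv_rpow hp.le, Real.rpow_neg hp.le, inv_inv]

theorem setOf_legendre_mul_absMoment_le_one {n : ℕ} {p q a : ℝ} (hpq : p.HolderConjugate q)
    (ha : 0 < a) {L : Set (EuclideanSpace ℝ (Fin n))} (hL : IsCompact L)
    (hLint : (interior L).Nonempty) :
    {x | legendre (fun v => a * absMoment (volume.restrict L) p id v) x ≤ 1} =
      ((a * (volume L).toReal * aOne n p) ^ (1 / p) * (q ^ (-(p / q)) * p⁻¹) ^ (-(1 / p))) •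
        centroidBody n p L := by
  have hp := hpq.pos
  have hq := hpq.symm.pos
  have haOne := aOne_pos n (by linarith : -1 < p)
  have hvol : 0 < (volume L).toReal := ENNReal.toReal_pos
    (Measure.measure_pos_of_nonempty_interior volume hLint).ne' hL.measure_lt_top.ne
  set M := absMoment (volume.restrict L) p (id : EuclideanSpace ℝ (Fin n) → _)
  have hMnonneg : ∀ v, 0 ≤ M v := absMoment_nonneg _ p id
  have hhom : PosHomogeneous p fun v => a * M v := (posHomogeneous_absMoment _ p id).const_mul a
  obtain ⟨c, hc, hlow⟩ := hhom.exists_mul_norm_rpow_le hp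
    ((continuous_absMoment_restrict hp.le continuous_id hL).const_mul a)
    fun _ hv => mul_pos ha (absMoment_restrict_id_pos hp hL hLint hv)
  set s := (a * (volume L).toReal * aOne n p) ^ (1 / p) * (q ^ (-(p / q)) * p⁻¹) ^ (-(1 / p))
    with hs
  have hspos : 0 < s := by positivity
  have hsupport : ∀ v, q ^ (1 / q) * (p * (a * M v)) ^ (1 / p) =
      s * ((aOne n p * (volume L).toReal)⁻¹ * M v) ^ (1 / p) := fun v => by
    have := hMnonneg v
    rw [hs, rpow_mul_inv_rpow_neg_one_div hp hq, mul_left_comm (_ ^ (1 / p)),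
      mul_assoc (q ^ (1 / q)), ← Real.mul_rpow (by positivity) hp.le,
      ← Real.mul_rpow (by positivity) (by positivity)]
    congr 2
    field_simp
  rw [setOf_legendre_le_one hpq hc hhom hlow]
  ext x
  rw [Set.mem_smul_set_iff_inv_smul_mem₀ hspos.ne']
  refine forall_congr' fun v => ?_
  rw [hsupport, real_inner_smul_left, inv_mul_le_iff₀ hspos]
  rfl

section DirectionalDerivative

theorem continuous_gradient {E : Type*} [NormedAddCommGroup E] [InnerProductSpace ℝ E]
    [CompleteSpace E] {f : E → ℝ} (hf : ContDiff ℝ 1 f) : Continuous (gradient f) :=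
  (InnerProductSpace.toDual ℝ E).symm.continuous.comp (hf.continuous_fderiv one_ne_zero)

theorem gradient_of_notMem_tsupport {E : Type*} [NormedAddCommGroup E] [InnerProductSpace ℝ E]
    [CompleteSpace E] {f : E → ℝ} {x : E} (hx : x ∉ tsupport f) : gradient f x = 0 := by
  rw [gradient, fderiv_of_notMem_tsupport ℝ hx, map_zero]

theorem eq_zero_of_forall_fderiv_apply_eq_zero {E F : Type*} [NormedAddCommGroup E]
    [NormedSpace ℝ E] [NormedAddCommGroup F] [NormedSpace ℝ F] {f : E → F}
    (hf : Differentiable ℝ f) (hsupp : HasCompactSupport f) {ξ : E}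
    (hξ : ξ ≠ 0) (h : ∀ y, fderiv ℝ f y ξ = 0) : f = 0 := by
  funext x
  have hline : ∀ t : ℝ, HasDerivAt (fun t : ℝ => f (x + t • ξ)) 0 t := fun t => by
    have hderiv := (hf (x + t • ξ)).hasFDerivAt.comp_hasDerivAt t
      (((hasDerivAt_id t).smul_const ξ).const_add x)
    rwa [one_smul, h] at hderiv
  have hconst : ∀ t : ℝ, f (x + t • ξ) = f x := fun t => by
    simpa using is_const_of_deriv_eq_zero (fun t => (hline t).differentiableAt)
      (fun t => (hline t).deriv) t 0
  have hembed : Topology.IsClosedEmbedding fun t : ℝ => x + t • ξ :=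
    (Homeomorph.addLeft x).isClosedEmbedding.comp (isClosedEmbedding_smul_left hξ)
  have hlim := (hsupp.comp_isClosedEmbedding hembed).is_zero_at_infty
  simp only [Function.comp_def, hconst] at hlim
  exact tendsto_nhds_unique tendsto_const_nhds hlim

variable {n : ℕ} {p : ℝ} {f : EuclideanSpace ℝ (Fin n) → ℝ}

theorem dirDerivLpNorm_eq_absMoment_rpow (hp : p ≠ 0) (f : EuclideanSpace ℝ (Fin n) → ℝ) :
    dirDerivLpNorm n p f =
      fun ξ => absMoment (volume.restrict (tsupport f)) p (gradient f) ξ ^ (1 / p) := by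
  funext ξ
  rw [absMoment, setIntegral_eq_integral_of_forall_compl_eq_zero]
  · simp only [dirDerivLpNorm, real_inner_comm]
  · intro y hy
    simp [gradient_of_notMem_tsupport hy, Real.zero_rpow hp]

theorem posHomogeneous_dirDerivLpNorm (hp : p ≠ 0) (f : EuclideanSpace ℝ (Fin n) → ℝ) :
    PosHomogeneous 1 (dirDerivLpNorm n p f) := by
  rw [dirDerivLpNorm_eq_absMoment_rpow hp]
  simpa only [mul_one_div_cancel hp] using
    (posHomogeneous_absMoment _ p (gradient f)).rpow_const (absMoment_nonneg _ p _) (1 / p)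

theorem continuous_dirDerivLpNorm (hp : 0 < p) (hf : ContDiff ℝ 1 f) (hsupp : HasCompactSupport f) :
    Continuous (dirDerivLpNorm n p f) := by
  rw [dirDerivLpNorm_eq_absMoment_rpow hp.ne']
  exact (continuous_absMoment_restrict hp.le (continuous_gradient hf) hsupp).rpow_const
    fun _ => .inr (by positivity)

theorem dirDerivLpNorm_pos (hp : 0 < p) (hf : ContDiff ℝ 1 f) (hsupp : HasCompactSupport f)
    (hne : f ≠ 0) {ξ : EuclideanSpace ℝ (Fin n)} (hξ : ξ ≠ 0) : 0 < dirDerivLpNorm n p f ξ := by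
  have hgrad := continuous_gradient hf
  obtain ⟨y, hy⟩ : ∃ y, ⟪ξ, gradient f y⟫ ≠ 0 := by
    by_contra! h
    refine hne (eq_zero_of_forall_fderiv_apply_eq_zero (hf.differentiable one_ne_zero) hsupp hξ
      fun y => ?_)
    rw [← inner_gradient_left, real_inner_comm, h]
  have hopen : IsOpen {y | ⟪ξ, gradient f y⟫ ≠ 0} := isOpen_ne_fun (by fun_prop) continuous_const
  have hsub : {y | ⟪ξ, gradient f y⟫ ≠ 0} ⊆ tsupport f := fun y hy => by
    by_contra hmem
    exact hy (by rw [gradient_of_notMem_tsupport hmem, inner_zero_right])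
  rw [dirDerivLpNorm_eq_absMoment_rpow hp.ne']
  exact Real.rpow_pos_of_pos
    (absMoment_restrict_pos hp hgrad hsupp (interior_maximal hsub hopen hy) hy) _

theorem isCompact_setOf_dirDerivLpNorm_le_one (hp : 0 < p) (hf : ContDiff ℝ 1 f)
    (hsupp : HasCompactSupport f) (hne : f ≠ 0) : IsCompact {ξ | dirDerivLpNorm n p f ξ ≤ 1} :=
  (posHomogeneous_dirDerivLpNorm hp.ne' f).isCompact_setOf_le_one one_pos
    (continuous_dirDerivLpNorm hp hf hsupp) fun _ => dirDerivLpNorm_pos hp hf hsupp hne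

theorem Cfstar_eq_mul_absMoment (hp : 0 < p) (hf : ContDiff ℝ 1 f) (hsupp : HasCompactSupport f)
    (hne : f ≠ 0) : Cfstar n p f = fun v =>
      (n + p) * absMoment (volume.restrict {ξ | dirDerivLpNorm n p f ξ ≤ 1}) p id v := by
  funext v
  have hpolar := (posHomogeneous_abs_inner_rpow p v).setIntegral_setOf_le_one volume hp
    (posHomogeneous_dirDerivLpNorm hp.ne' f) (continuous_dirDerivLpNorm hp hf hsupp).measurable
    (fun _ => dirDerivLpNorm_pos hp hf hsupp hne) (integrableOn_abs_inner_rpow hp.le continuous_id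
      (isCompact_setOf_dirDerivLpNorm_le_one hp hf hsupp hne) v)
  rw [finrank_euclideanSpace_fin] at hpolar
  rw [← inv_mul_eq_iff_eq_mul₀ (by positivity)]
  exact hpolar.symm

end DirectionalDerivative

theorem Kf_eq_dilated_centroid_body_general {n : ℕ} {p q : ℝ} (hpq : p.HolderConjugate q)
    {f : EuclideanSpace ℝ (Fin n) → ℝ} (hf : ContDiff ℝ 1 f) (hsupp : HasCompactSupport f)
    (hne : f ≠ 0) :
    {x : EuclideanSpace ℝ (Fin n) | legendre (Cfstar n p f) x ≤ 1} =
      ((((n : ℝ) + p) *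
            (volume {ξ : EuclideanSpace ℝ (Fin n) | dirDerivLpNorm n p f ξ ≤ 1}).toReal *
            aOne n p) ^ (1 / p) * (q ^ (-(p / q)) * p⁻¹) ^ (-(1 / p))) •
        centroidBody n p {ξ : EuclideanSpace ℝ (Fin n) | dirDerivLpNorm n p f ξ ≤ 1} := by
  have hp := hpq.pos
  have hnhds : {ξ | dirDerivLpNorm n p f ξ ≤ 1} ∈ nhds 0 :=
    (posHomogeneous_dirDerivLpNorm hp.ne' f).setOf_le_one_mem_nhds_zero one_pos
      (continuous_dirDerivLpNorm hp hf hsupp).continuousAt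
  rw [Cfstar_eq_mul_absMoment hp hf hsupp hne]
  exact setOf_legendre_mul_absMoment_le_one hpq (by positivity)
    (isCompact_setOf_dirDerivLpNorm_le_one hp hf hsupp hne) ⟨0, mem_interior_iff_mem_nhds.2 hnhds⟩

/-- `K_f = ((n+p) vol(L_f) a₁)^{1/p} ℓ_q^{-1/p} Γ_p L_f`. -/
theorem Kf_eq_dilated_centroid_body (n : ℕ) (hn : 1 ≤ n) (p q : ℝ) (hp : 1 < p)
    (hpq : 1 / p + 1 / q = 1) (f : EuclideanSpace ℝ (Fin n) → ℝ) (hf : ContDiff ℝ (⊤ : ℕ∞) f)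
    (hsupp : HasCompactSupport f) (hne : f ≠ 0) :
    {x : EuclideanSpace ℝ (Fin n) | legendre (Cfstar n p f) x ≤ 1} =
      ((((n : ℝ) + p) *
            (volume {ξ : EuclideanSpace ℝ (Fin n) | dirDerivLpNorm n p f ξ ≤ 1}).toReal *
            aOne n p) ^ (1 / p) * (q ^ (-(p / q)) * p⁻¹) ^ (-(1 / p))) •
        centroidBody n p {ξ : EuclideanSpace ℝ (Fin n) | dirDerivLpNorm n p f ξ ≤ 1} :=
  Kf_eq_dilated_centroid_body_general
    (Real.holderConjugate_iff.2 ⟨hp, by simpa only [one_div] using hpq⟩)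
    (hf.of_le (by exact_mod_cast le_top)) hsupp hne
end
end

section
/- Affine L_∞ log-Sobolev inequality: for n ≥ 1, β > 0, and any Lipschitz function f on ℝⁿ with ∫ e^{βf} dx = 1, one has Ent(e^{βf}) ≤ n log((β k_n/e) 𝓔_∞(f)), where 𝓔_∞(f) = (nω_n)^{1/n} (∫_{S^{n-1}} ‖∇_ξ f‖_∞^{-n} dξ)^{-1/n} and k_n = (n! ω_n)^{-1/n}. This may assume as a hypothesis Fujita's general L_∞ log-Sobolev inequality: Ent(e^{βf}) ≤ n log((β/e)(∫ e^{-H})^{-1/n} ‖H̄(∇f)‖_∞) for any norm H with dual norm H̄. -/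
/-!
The energy `𝓔_∞(f)` only involves the seminorm `p ξ = ‖∇_ξ f‖_∞`. It is a norm: if `p v = 0`, then
`f` is invariant under translation by `v`, and a nonzero integrable function such as `e^{βf}` has no
translation invariance except `v = 0`. Fujita's inequality therefore applies to `H = p`. By
construction `|⟨∇f(x), ξ⟩| ≤ p ξ` for almost every `x` and all `ξ`, and no constant below `1` would
do, so the dual norm of `∇f` has essential supremum exactly `1`. What remains is
`∫ e^{-p} = (n - 1)! ∫_{S^{n-1}} p^{-n}`, by polar coordinates and the Gamma integral on each ray.
-/

open MeasureTheory Real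
open scoped RealInnerProductSpace

noncomputable section

/-- `ω_n`, the volume of the unit ball of `ℝⁿ`. -/
def omegaN (n : ℕ) : ℝ := (volume (Metric.ball (0 : EuclideanSpace ℝ (Fin n)) 1)).toReal

/-- `k_n = (n! ω_n)^{-1/n}`. -/
def kn (n : ℕ) : ℝ := ((n.factorial : ℝ) * omegaN n) ^ (-(1 / (n : ℝ)))

/-- `‖∇_ξ f‖_∞ = ess sup_x |⟨∇f(x), ξ⟩|`. -/
def dirDerivLinftyNorm (n : ℕ) (f : EuclideanSpace ℝ (Fin n) → ℝ)
    (ξ : EuclideanSpace ℝ (Fin n)) : ℝ :=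
  essSup (fun x => |⟪gradient f x, ξ⟫|) volume

/-- The affine `L_∞` energy
`𝓔_∞(f) = (n ω_n)^{1/n} (∫_{S^{n-1}} ‖∇_ξ f‖_∞^{-n} dξ)^{-1/n}`. -/
def affineEnergyInfty (n : ℕ) (f : EuclideanSpace ℝ (Fin n) → ℝ) : ℝ :=
  ((n : ℝ) * omegaN n) ^ (1 / (n : ℝ)) *
    (∫ ξ : Metric.sphere (0 : EuclideanSpace ℝ (Fin n)) 1,
        dirDerivLinftyNorm n f (ξ : EuclideanSpace ℝ (Fin n)) ^ (-(n : ℝ))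
          ∂(volume : Measure (EuclideanSpace ℝ (Fin n))).toSphere) ^ (-(1 / (n : ℝ)))

open Filter TopologicalSpace

section EssSupInner

variable {Ω E : Type*} [MeasurableSpace Ω] {μ : Measure Ω} [NormedAddCommGroup E]
  [InnerProductSpace ℝ E] {u : Ω → E}

lemma isBoundedUnder_abs_inner (hu : IsBoundedUnder (· ≤ ·) (ae μ) (‖u ·‖)) (ξ : E) :
    IsBoundedUnder (· ≤ ·) (ae μ) (fun x ↦ |⟪u x, ξ⟫|) := by
  obtain ⟨K, hK⟩ := hu
  refine ⟨K * ‖ξ‖, eventually_map.2 ?_⟩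
  filter_upwards [eventually_map.1 hK] with x hx
  grw [abs_real_inner_le_norm, hx]

lemma ae_abs_inner_le_essSup (hu : IsBoundedUnder (· ≤ ·) (ae μ) (‖u ·‖)) (ξ : E) :
    ∀ᵐ x ∂μ, |⟪u x, ξ⟫| ≤ essSup (fun x ↦ |⟪u x, ξ⟫|) μ :=
  ae_le_essSup (isBoundedUnder_abs_inner hu ξ)

variable [NeZero μ]

lemma essSup_abs_inner_le {ξ : E} {c : ℝ} (h : ∀ᵐ x ∂μ, |⟪u x, ξ⟫| ≤ c) :
    essSup (fun x ↦ |⟪u x, ξ⟫|) μ ≤ c :=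
  essSup_le_of_ae_le c h (isBoundedUnder_of ⟨0, fun _ ↦ abs_nonneg _⟩).isCoboundedUnder_le

/-- The seminorm `ξ ↦ ess sup_x |⟨u x, ξ⟩|` attached to an essentially bounded vector field `u`.
For `u = ∇f` it is the map `ξ ↦ ‖∇_ξ f‖_∞`. -/
def essSupInnerSeminorm (u : Ω → E) (hu : IsBoundedUnder (· ≤ ·) (ae μ) (‖u ·‖)) :
    Seminorm ℝ E :=
  .ofSMulLE (fun ξ ↦ essSup (fun x ↦ |⟪u x, ξ⟫|) μ)
    (by simp [essSup_const _ (NeZero.ne μ)])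
    (fun ξ η ↦ essSup_abs_inner_le <| by
      filter_upwards [ae_abs_inner_le_essSup hu ξ, ae_abs_inner_le_essSup hu η] with x hξ hη
      grw [inner_add_right, abs_add_le, hξ, hη])
    (fun r ξ ↦ essSup_abs_inner_le <| by
      filter_upwards [ae_abs_inner_le_essSup hu ξ] with x hξ
      rw [inner_smul_right, abs_mul, Real.norm_eq_abs]
      gcongr)

variable (hu : IsBoundedUnder (· ≤ ·) (ae μ) (‖u ·‖))

lemma continuous_essSupInnerSeminorm : Continuous (essSupInnerSeminorm u hu) := by
  have ⟨K, hK⟩ := hu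
  have hle : essSupInnerSeminorm u hu ≤ K.toNNReal • normSeminorm ℝ E := by
    refine fun ξ ↦ essSup_abs_inner_le ?_
    filter_upwards [eventually_map.1 hK] with x hx
    calc |⟪u x, ξ⟫| ≤ ‖u x‖ * ‖ξ‖ := abs_real_inner_le_norm _ _
      _ ≤ K.toNNReal * ‖ξ‖ := by grw [hx, Real.le_coe_toNNReal K]
  exact Seminorm.continuous_of_le (continuous_norm.const_smul K.toNNReal) hle

lemma ae_forall_abs_inner_le_essSupInnerSeminorm [SeparableSpace E] :
    ∀ᵐ x ∂μ, ∀ ξ, |⟪u x, ξ⟫| ≤ essSupInnerSeminorm u hu ξ := by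
  filter_upwards [ae_all_iff.2 fun k ↦ ae_abs_inner_le_essSup hu (denseSeq E k)] with x hx
  exact isClosed_property (denseRange_denseSeq E)
    (isClosed_le (by fun_prop) (continuous_essSupInnerSeminorm hu)) hx

end EssSupInner

section DualNorm

variable {E : Type*} [NormedAddCommGroup E] [InnerProductSpace ℝ E] {p : Seminorm ℝ E} {v : E}

/-- The dual norm `H̄ v = sup {⟨v, y⟩ : H y ≤ 1}` of a (semi)norm `H`, with `E` identified with its
dual; equivalently the support function of the unit ball of `H`. It is the real supremum, hence `0`
when `⟨v, ·⟩` is unbounded on the unit ball. -/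
def dualNorm (H : E → ℝ) (v : E) : ℝ := sSup {t : ℝ | ∃ y, H y ≤ 1 ∧ t = ⟪v, y⟫}

lemma dualNorm_nonneg : 0 ≤ dualNorm p v :=
  Real.sSup_nonneg' ⟨0, ⟨0, by simp, by simp⟩, le_rfl⟩

lemma dualNorm_le {c : ℝ} (hc : 0 ≤ c) (hv : ∀ y, ⟪v, y⟫ ≤ c * p y) : dualNorm p v ≤ c := by
  refine Real.sSup_le ?_ hc
  rintro _ ⟨y, hy, rfl⟩
  exact (hv y).trans (mul_le_of_le_one_right hc hy)

lemma inner_le_dualNorm_mul (hv : BddAbove {t : ℝ | ∃ y, p y ≤ 1 ∧ t = ⟪v, y⟫}) {ξ : E}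
    (hξ : p ξ ≠ 0) : ⟪v, ξ⟫ ≤ dualNorm p v * p ξ := by
  have hpos : 0 < p ξ := (apply_nonneg p ξ).lt_of_ne' hξ
  have hunit : p ((p ξ)⁻¹ • ξ) ≤ 1 := by
    rw [map_smul_eq_mul, norm_inv, Real.norm_of_nonneg hpos.le, inv_mul_cancel₀ hξ]
  have hsup : ⟪v, (p ξ)⁻¹ • ξ⟫ ≤ dualNorm p v := le_csSup hv ⟨_, hunit, rfl⟩
  rwa [inner_smul_right, inv_mul_le_iff₀' hpos] at hsup

lemma abs_inner_le_dualNorm_mul (hv : BddAbove {t : ℝ | ∃ y, p y ≤ 1 ∧ t = ⟪v, y⟫}) {ξ : E}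
    (hξ : p ξ ≠ 0) : |⟪v, ξ⟫| ≤ dualNorm p v * p ξ := by
  refine abs_le'.2 ⟨inner_le_dualNorm_mul hv hξ, ?_⟩
  rw [← inner_neg_right, ← map_neg_eq_map p]
  exact inner_le_dualNorm_mul hv (by rwa [map_neg_eq_map])

theorem essSup_dualNorm_essSupInnerSeminorm_eq_one {Ω : Type*} [MeasurableSpace Ω] {μ : Measure Ω}
    [NeZero μ] [SeparableSpace E] {u : Ω → E} (hu : IsBoundedUnder (· ≤ ·) (ae μ) (‖u ·‖))
    {ξ : E} (hξ : essSupInnerSeminorm u hu ξ ≠ 0) :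
    essSup (fun x ↦ dualNorm (essSupInnerSeminorm u hu) (u x)) μ = 1 := by
  set p := essSupInnerSeminorm u hu
  have hinner : ∀ᵐ x ∂μ, ∀ y, ⟪u x, y⟫ ≤ p y := by
    filter_upwards [ae_forall_abs_inner_le_essSupInnerSeminorm hu] with x hx y
    exact (le_abs_self _).trans (hx y)
  have hle : ∀ᵐ x ∂μ, dualNorm p (u x) ≤ 1 := by
    filter_upwards [hinner] with x hx
    exact dualNorm_le zero_le_one (by simpa using hx)
  refine le_antisymm (essSup_le_of_ae_le 1 hle
    (isBoundedUnder_of ⟨0, fun _ ↦ dualNorm_nonneg⟩).isCoboundedUnder_le) ?_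
  have hself : p ξ ≤ essSup (fun x ↦ dualNorm p (u x)) μ * p ξ := by
    refine essSup_abs_inner_le ?_
    filter_upwards [hinner, ae_le_essSup ⟨1, eventually_map.2 hle⟩] with x hx hsup
    have hbdd : BddAbove {t : ℝ | ∃ y, p y ≤ 1 ∧ t = ⟪u x, y⟫} :=
      ⟨1, by rintro _ ⟨y, hy, rfl⟩; exact (hx y).trans hy⟩
    grw [abs_inner_le_dualNorm_mul hbdd hξ, hsup]
  exact (le_mul_iff_one_le_left ((apply_nonneg p ξ).lt_of_ne' hξ)).1 hself

end DualNorm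

section Periodic

variable {E F : Type*} [NormedAddCommGroup E] [NormedSpace ℝ E] [MeasurableSpace E] [BorelSpace E]
  {μ : Measure E} [μ.IsAddHaarMeasure] [NormedAddCommGroup F] {v : E}

lemma measure_eq_top_of_add_mem {s : Set E} (hs : IsOpen s) (hne : s.Nonempty) (hv : v ≠ 0)
    (hadd : ∀ x ∈ s, x + v ∈ s) : μ s = ⊤ := by
  obtain ⟨x, hx⟩ := hne
  obtain ⟨r, hr, hball⟩ := Metric.isOpen_iff.1 hs x hx
  set ρ := min r (‖v‖ / 2)
  have hρ : 0 < ρ := by positivity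
  let B : ℕ → Set E := fun k ↦ Metric.ball (x + k • v) ρ
  have hsub (k : ℕ) : B k ⊆ s := by
    induction k with
    | zero => simpa [B] using (Metric.ball_subset_ball (min_le_left r _)).trans hball
    | succ k ih =>
      intro y hy
      have hmem : y - v ∈ B k := by
        simpa [B, dist_eq_norm, succ_nsmul, sub_sub, add_assoc, add_comm v] using hy
      simpa using hadd _ (ih hmem)
  have hdisj : Pairwise (Function.onFun Disjoint B) := by
    intro i j hij
    refine Metric.ball_disjoint_ball ?_
    have hone : (1 : ℝ) ≤ |(i : ℝ) - j| := by
      exact_mod_cast Int.one_le_abs (sub_ne_zero.2 (Nat.cast_injective.ne hij : (i : ℤ) ≠ j))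
    calc ρ + ρ ≤ 1 * ‖v‖ := by linarith [min_le_right r (‖v‖ / 2)]
      _ ≤ |(i : ℝ) - j| * ‖v‖ := by gcongr
      _ = dist (x + i • v) (x + j • v) := by
        rw [dist_add_left, dist_eq_norm, ← Nat.cast_smul_eq_nsmul ℝ i,
          ← Nat.cast_smul_eq_nsmul ℝ j, ← sub_smul, norm_smul, Real.norm_eq_abs]
  refine top_le_iff.1 ?_
  calc (⊤ : ENNReal) = ∑' k, μ (B k) := by
        simp only [B, Measure.addHaar_ball_center μ]
        exact (ENNReal.tsum_const_eq_top_of_ne_zero (Metric.measure_ball_pos μ _ hρ).ne').symm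
    _ = μ (⋃ k, B k) := (measure_iUnion hdisj fun _ ↦ measurableSet_ball).symm
    _ ≤ μ s := measure_mono (Set.iUnion_subset hsub)

theorem eq_zero_of_periodic_of_integrable {g : E → F} (hg : Continuous g)
    (hper : Function.Periodic g v) (hint : Integrable g μ) (hv : v ≠ 0) : g = 0 := by
  by_contra hne
  obtain ⟨x, hx⟩ := Function.ne_iff.1 hne
  have hpos : 0 < ‖g x‖ := norm_pos_iff.2 hx
  refine (hint.measure_norm_gt_lt_top (half_pos hpos)).ne
    (measure_eq_top_of_add_mem (isOpen_lt continuous_const hg.norm) ⟨x, half_lt_self hpos⟩ hv ?_)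
  intro y hy
  simpa only [Set.mem_ofPred_eq, hper y] using hy

variable [NormedSpace ℝ F] [CompleteSpace F] [FiniteDimensional ℝ E] {K : NNReal}

theorem periodic_of_ae_hasLineDerivAt_zero {f : E → F} (hf : LipschitzWith K f)
    (hv : ∀ᵐ x ∂μ, HasLineDerivAt ℝ f 0 x v) : Function.Periodic f v := by
  borelize F
  let s : Set E := {x | LineDifferentiableAt ℝ f x v} ∩ {x | lineDeriv ℝ f x v = 0}
  have hs : MeasurableSet s := (measurableSet_lineDifferentiableAt hf.continuous).inter
    (measurable_lineDeriv hf.continuous (measurableSet_singleton 0))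
  have hmem : ∀ᵐ x ∂μ, x ∈ s := hv.mono fun x hx ↦ ⟨hx.lineDifferentiableAt, hx.lineDeriv⟩
  have hlines : ∀ᵐ x ∂μ, ∀ᵐ t : ℝ, x + t • v ∈ s :=
    (ae_ae_add_linearMap_mem_iff (LinearMap.toSpanSingleton ℝ E v) volume μ hs).2 hmem
  have hae : (fun x ↦ f (x + v)) =ᵐ[μ] f := by
    filter_upwards [hlines] with x hx
    have hlip : LipschitzWith (K * ‖v‖₊) (fun t : ℝ ↦ f (x + t • v)) :=
      hf.comp <| LipschitzWith.of_dist_le_mul fun a b ↦ by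
        simp [dist_eq_norm, ← sub_smul, norm_smul, mul_comm]
    obtain ⟨c, hc⟩ := (hlip.lipschitzOnWith
        (s := Set.uIcc 0 1)).absolutelyContinuousOnInterval.const_of_ae_hasDerivAt_zero <| by
      filter_upwards [hx] with t ⟨hdiff, hzero⟩ _
      have hline : HasDerivAt (fun r : ℝ ↦ f (x + t • v + r • v)) 0 (t - t) := by
        simpa [HasLineDerivAt, hzero.out] using hdiff.hasLineDerivAt
      simpa [add_assoc, ← add_smul] using hline.comp_sub_const t t
    simpa using (hc 1 Set.right_mem_uIcc).trans (hc 0 Set.left_mem_uIcc).symm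
  exact congrFun <|
    (Continuous.ae_eq_iff_eq μ (hf.continuous.comp (by fun_prop)) hf.continuous).1 hae

end Periodic

section Gradient

variable {E : Type*} [NormedAddCommGroup E] [InnerProductSpace ℝ E] {K : NNReal} {f : E → ℝ}

lemma norm_gradient_le_of_lipschitzWith [CompleteSpace E] (hf : LipschitzWith K f) (x : E) :
    ‖gradient f x‖ ≤ K := by
  rw [gradient, LinearIsometryEquiv.norm_map]
  exact norm_fderiv_le_of_lipschitz ℝ hf

variable [MeasurableSpace E]

lemma isBoundedUnder_norm_gradient [CompleteSpace E] (hf : LipschitzWith K f) (μ : Measure E) :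
    IsBoundedUnder (· ≤ ·) (ae μ) (‖gradient f ·‖) :=
  isBoundedUnder_of ⟨K, norm_gradient_le_of_lipschitzWith hf⟩

variable [BorelSpace E] [FiniteDimensional ℝ E] {μ : Measure E} [μ.IsAddHaarMeasure]

lemma periodic_of_ae_inner_gradient_eq_zero (hf : LipschitzWith K f) {v : E}
    (hv : ∀ᵐ x ∂μ, ⟪gradient f x, v⟫ = 0) : Function.Periodic f v := by
  refine periodic_of_ae_hasLineDerivAt_zero (μ := μ) hf ?_
  filter_upwards [hv, hf.ae_differentiableAt (μ := μ)] with x hx hdiff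
  rw [inner_gradient_left] at hx
  exact hx ▸ hdiff.hasFDerivAt.hasLineDerivAt v

theorem essSupInnerSeminorm_gradient_eq_zero_iff (hf : LipschitzWith K f) {φ : ℝ → ℝ}
    (hφ : Continuous φ) (hne : φ ∘ f ≠ 0) (hint : Integrable (φ ∘ f) μ) {v : E} :
    essSupInnerSeminorm (gradient f) (isBoundedUnder_norm_gradient hf μ) v = 0 ↔ v = 0 := by
  refine ⟨fun h ↦ ?_, by rintro rfl; exact map_zero _⟩
  have hper : Function.Periodic f v := by
    refine periodic_of_ae_inner_gradient_eq_zero (μ := μ) hf ?_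
    filter_upwards [ae_forall_abs_inner_le_essSupInnerSeminorm
      (isBoundedUnder_norm_gradient hf μ)] with x hx
    exact abs_nonpos_iff.1 (h ▸ hx v)
  by_contra hv
  exact hne (eq_zero_of_periodic_of_integrable (hφ.comp hf.continuous) (hper.comp φ) hint hv)

end Gradient

section Polar

lemma lintegral_Ioi_pow_mul_exp_neg_mul (m : ℕ) {a : ℝ} (ha : 0 < a) :
    ∫⁻ r in Set.Ioi (0 : ℝ), ENNReal.ofReal (r ^ m * Real.exp (-(a * r))) =
      ENNReal.ofReal (m.factorial * a ^ (-(m + 1 : ℝ))) := by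
  have hΓ : ∫ r in Set.Ioi (0 : ℝ), r ^ m * Real.exp (-(a * r)) =
      m.factorial * a ^ (-(m + 1 : ℝ)) := by
    have h := Real.integral_rpow_mul_exp_neg_mul_Ioi (a := m + 1) (by positivity) ha
    simp only [add_sub_cancel_right, Real.rpow_natCast] at h
    rw [h, Real.Gamma_nat_eq_factorial, one_div, Real.inv_rpow ha.le, Real.rpow_neg ha.le, mul_comm]
  rw [← hΓ, ofReal_integral_eq_lintegral_ofReal]
  · exact .of_integral_ne_zero (hΓ ▸ by positivity)
  · filter_upwards [ae_restrict_mem measurableSet_Ioi] with r hr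
    have : 0 < r := hr
    positivity

variable {E : Type*} [NormedAddCommGroup E] [NormedSpace ℝ E] [FiniteDimensional ℝ E]
  [Nontrivial E] [MeasurableSpace E] [BorelSpace E] (μ : Measure E) [μ.IsAddHaarMeasure]

theorem lintegral_eq_lintegral_toSphere {g : E → ENNReal} (hg : Measurable g) :
    ∫⁻ x, g x ∂μ = ∫⁻ ξ : Metric.sphere (0 : E) 1, (∫⁻ r in Set.Ioi (0 : ℝ),
      ENNReal.ofReal (r ^ (Module.finrank ℝ E - 1)) * g (r • (ξ : E))) ∂μ.toSphere := by
  have hpolar : Measurable fun z : Metric.sphere (0 : E) 1 × Set.Ioi (0 : ℝ) ↦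
      g ((z.2 : ℝ) • (z.1 : E)) := hg.comp (by fun_prop)
  calc ∫⁻ x, g x ∂μ
      = ∫⁻ x : ({0}ᶜ : Set E), g x ∂(μ.comap (↑)) := by
        rw [lintegral_subtype_comap (measurableSet_singleton _).compl, restrict_compl_singleton]
    _ = ∫⁻ z, g ((z.2 : ℝ) • (z.1 : E))
          ∂μ.toSphere.prod (.volumeIoiPow (Module.finrank ℝ E - 1)) := by
        rw [← μ.measurePreserving_homeomorphUnitSphereProd.lintegral_comp hpolar]
        refine lintegral_congr fun x ↦ ?_
        rw [← homeomorphUnitSphereProd_symm_apply_coe, Homeomorph.symm_apply_apply]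
    _ = ∫⁻ ξ, (∫⁻ r, g ((r : ℝ) • (ξ : E)) ∂(.volumeIoiPow (Module.finrank ℝ E - 1)))
          ∂μ.toSphere := lintegral_prod _ hpolar.aemeasurable
    _ = _ := by
        refine lintegral_congr fun ξ ↦ ?_
        have hray : Measurable fun r : Set.Ioi (0 : ℝ) ↦ g ((r : ℝ) • (ξ : E)) :=
          hg.comp (by fun_prop)
        rw [Measure.volumeIoiPow, lintegral_withDensity_eq_lintegral_mul _ (by fun_prop) hray,
          ← lintegral_subtype_comap measurableSet_Ioi]
        rfl

theorem integral_exp_neg_eq_factorial_mul_integral_toSphere {H : E → ℝ} (hH : Measurable H)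
    (hsmul : ∀ r : ℝ, 0 < r → ∀ x, H (r • x) = r * H x) (hpos : ∀ x, x ≠ 0 → 0 < H x) :
    ∫ x, Real.exp (-H x) ∂μ = ((Module.finrank ℝ E - 1).factorial : ℝ) *
      ∫ ξ : Metric.sphere (0 : E) 1, H (ξ : E) ^ (-(Module.finrank ℝ E : ℝ)) ∂μ.toSphere := by
  have hpos_sphere (ξ : Metric.sphere (0 : E) 1) : 0 < H ξ :=
    hpos _ (ne_zero_of_mem_unit_sphere ξ)
  have hdim : ((Module.finrank ℝ E - 1 : ℕ) + 1 : ℝ) = Module.finrank ℝ E := by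
    exact_mod_cast Nat.sub_add_cancel (Module.finrank_pos (R := ℝ) (M := E))
  rw [← integral_const_mul, integral_eq_lintegral_of_nonneg_ae, integral_eq_lintegral_of_nonneg_ae,
    lintegral_eq_lintegral_toSphere μ (by fun_prop)]
  · congr 1
    refine lintegral_congr fun ξ ↦ ?_
    rw [← hdim, ← lintegral_Ioi_pow_mul_exp_neg_mul _ (hpos_sphere ξ)]
    refine setLIntegral_congr_fun measurableSet_Ioi fun r (hr : 0 < r) ↦ ?_
    rw [← ENNReal.ofReal_mul (by positivity), hsmul r hr, mul_comm r]
  · exact .of_forall fun ξ ↦ mul_nonneg (Nat.cast_nonneg _) (Real.rpow_nonneg (hpos_sphere ξ).le _)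
  · have : Measurable fun ξ : Metric.sphere (0 : E) 1 ↦ H ξ := hH.comp measurable_subtype_coe
    exact (by fun_prop : Measurable _).aestronglyMeasurable
  · exact .of_forall fun x ↦ (Real.exp_pos _).le
  · exact (by fun_prop : Measurable _).aestronglyMeasurable

end Polar

section Constants

lemma omegaN_pos (n : ℕ) : 0 < omegaN n :=
  ENNReal.toReal_pos (Metric.measure_ball_pos _ _ one_pos).ne' measure_ball_lt_top.ne

lemma kn_mul_rpow {n : ℕ} (hn : n ≠ 0) :
    kn n * ((n : ℝ) * omegaN n) ^ (1 / (n : ℝ)) = ((n - 1).factorial : ℝ) ^ (-(1 / (n : ℝ))) := by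
  have hω := omegaN_pos n
  have hsplit : (n.factorial : ℝ) * omegaN n = (n - 1).factorial * (n * omegaN n) := by
    rw [← Nat.mul_factorial_pred hn]
    push_cast
    ring
  rw [kn, hsplit, Real.mul_rpow (by positivity) (by positivity), mul_assoc,
    ← Real.rpow_add (by positivity), neg_add_cancel, Real.rpow_zero, mul_one]

theorem kn_mul_affineEnergyInfty {n : ℕ} (hn : n ≠ 0) {f : EuclideanSpace ℝ (Fin n) → ℝ}
    {p : Seminorm ℝ (EuclideanSpace ℝ (Fin n))} (hp : Continuous p) (hp₀ : ∀ x, p x = 0 ↔ x = 0)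
    (hpf : ∀ ξ, dirDerivLinftyNorm n f ξ = p ξ) :
    kn n * affineEnergyInfty n f = (∫ x, Real.exp (-p x)) ^ (-(1 / (n : ℝ))) := by
  have : NeZero n := ⟨hn⟩
  have hpolar := integral_exp_neg_eq_factorial_mul_integral_toSphere volume hp.measurable
    (fun r hr x ↦ by rw [map_smul_eq_mul, Real.norm_of_nonneg hr.le])
    (fun x hx ↦ (apply_nonneg p x).lt_of_ne' ((hp₀ x).not.2 hx))
  rw [finrank_euclideanSpace_fin] at hpolar
  simp only [affineEnergyInfty, hpf]
  rw [← mul_assoc, kn_mul_rpow hn, hpolar, Real.mul_rpow (by positivity)]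
  exact integral_nonneg fun ξ ↦ Real.rpow_nonneg (apply_nonneg p _) _

end Constants

/-- Affine `L_∞` log-Sobolev inequality: for Lipschitz `f` with `∫ e^{βf} = 1`, assuming
Fujita's general `L_∞` log-Sobolev inequality for arbitrary norms `H`,
`Ent(e^{βf}) ≤ n log((β k_n / e) 𝓔_∞(f))`. -/
theorem affine_Linfty_log_Sobolev (n : ℕ) (hn : 1 ≤ n) (β : ℝ) (hβ : 0 < β)
    (f : EuclideanSpace ℝ (Fin n) → ℝ) (hf : ∃ K, LipschitzWith K f)
    (hnorm : (∫ x, Real.exp (β * f x)) = 1)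
    (hFujita : ∀ H : EuclideanSpace ℝ (Fin n) → ℝ,
      (∀ x y, H (x + y) ≤ H x + H y) →
      (∀ (l : ℝ) (x), H (l • x) = |l| * H x) →
      (∀ x, H x = 0 ↔ x = 0) →
      (∫ x, Real.exp (β * f x) * (β * f x)) ≤
        (n : ℝ) * Real.log ((β / Real.exp 1) *
          (∫ x, Real.exp (-(H x))) ^ (-(1 / (n : ℝ))) *
          essSup (fun x => sSup {t : ℝ | ∃ y, H y ≤ 1 ∧ t = ⟪gradient f x, y⟫}) volume)) :
    (∫ x, Real.exp (β * f x) * (β * f x)) ≤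
      (n : ℝ) * Real.log (β * kn n / Real.exp 1 * affineEnergyInfty n f) := by
  obtain ⟨K, hf⟩ := hf
  have hn₀ : n ≠ 0 := Nat.one_le_iff_ne_zero.1 hn
  have : NeZero n := ⟨hn₀⟩
  have hbdd := isBoundedUnder_norm_gradient hf volume
  let p := essSupInnerSeminorm (gradient f) hbdd
  have hp₀ (ξ : EuclideanSpace ℝ (Fin n)) : p ξ = 0 ↔ ξ = 0 :=
    essSupInnerSeminorm_gradient_eq_zero_iff hf (φ := fun t ↦ Real.exp (β * t)) (by fun_prop)
      (Function.ne_iff.2 ⟨0, Real.exp_ne_zero _⟩) (.of_integral_ne_zero (hnorm ▸ one_ne_zero))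
  obtain ⟨ξ, hξ⟩ := exists_ne (0 : EuclideanSpace ℝ (Fin n))
  have hdual : essSup (fun x ↦ dualNorm p (gradient f x)) volume = 1 :=
    essSup_dualNorm_essSupInnerSeminorm_eq_one hbdd ((hp₀ ξ).not.2 hξ)
  have henergy : kn n * affineEnergyInfty n f = (∫ x, Real.exp (-p x)) ^ (-(1 / (n : ℝ))) :=
    kn_mul_affineEnergyInfty hn₀ (continuous_essSupInnerSeminorm hbdd) hp₀ fun _ ↦ rfl
  have hineq := hFujita p (map_add_le_add p) (map_smul_eq_mul p) hp₀
  unfold dualNorm at hdual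
  rw [hdual, mul_one, ← henergy] at hineq
  convert hineq using 3
  ring
end
end
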